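/- Let G be the parallel composition of r ≥ 2 paths whose lengths have mixed parities (at least one path of odd length and at least one path of even length), let H_1 be the parallel composition of the paths of odd length, and let H_2 be the parallel composition of the paths of even length. Then reg(G) ≥ reg(H_1) + reg(H_2) + (q−2). -/

import Mathlib

open MvPolynomial

/-- A finite multigraph without loops: each edge `e` has two distinct endpoints
`fst e` and `snd e`.  Multiple edges with the same endpoints are allowed. -/
structure Multigraph (V E : Type) : Type where
  fst : E → V
  snd : E → V
  ne : ∀ e, fst e ≠ snd e

namespace Multigraph

variable {V E : Type}

/-- Vertex `v` is an endpoint of the edge `e`. -/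
def Incident (G : Multigraph V E) (v : V) (e : E) : Prop :=
  G.fst e = v ∨ G.snd e = v

instance (G : Multigraph V E) [DecidableEq V] (v : V) : DecidablePred (G.Incident v) :=
  fun e => inferInstanceAs (Decidable (G.fst e = v ∨ G.snd e = v))

/-- The degree of a vertex: the number of edges incident to it. -/
noncomputable def degree (G : Multigraph V E) (v : V) : ℕ :=
  Nat.card {e : E // G.Incident v e}

/-- The graph has no isolated vertices. -/
def NoIsolated (G : Multigraph V E) : Prop :=
  ∀ v : V, ∃ e : E, G.Incident v e

variable (K : Type) [Field K] [Fintype K]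

/-- The point of the affine torus associated with an assignment `x` of nonzero
scalars to the vertices: its coordinate at an edge `e = {v,w}` is `x v * x w`. -/
def point (G : Multigraph V E) (x : V → Kˣ) : E → K :=
  fun e => (x (G.fst e) : K) * (x (G.snd e) : K)

/-- The projective toric subset `X` parameterized by `G`, realized as the set of
`Kˣ`-orbits (i.e. projective points) of the points `G.point K x`, `x : V → Kˣ`. -/
def toricSet (G : Multigraph V E) : Set (Set (E → K)) :=
  Set.range fun x : V → Kˣ => MulAction.orbit Kˣ (G.point K x)

/-- The vanishing ideal `I(X)` of the projective toric subset parameterized by `G`: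
the ideal of all polynomials each of whose homogeneous components vanishes at the
point `G.point K x` for every `x : V → Kˣ`. -/
def vanishingIdeal (G : Multigraph V E) : Ideal (MvPolynomial E K) where
  carrier := {f | ∀ (x : V → Kˣ) (d : ℕ), eval (G.point K x) (homogeneousComponent d f) = 0}
  zero_mem' := by intro x d; simp
  add_mem' := by
    intro a b ha hb x d
    rw [map_add, map_add, ha x d, hb x d, add_zero]
  smul_mem' := by
    intro c f hf x n
    rw [smul_eq_mul, ← sum_homogeneousComponent f, Finset.mul_sum, map_sum, map_sum]
    refine Finset.sum_eq_zero fun d _ => ?_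
    nth_rewrite 1 [← sum_homogeneousComponent c]
    rw [Finset.sum_mul, map_sum, map_sum]
    refine Finset.sum_eq_zero fun e _ => ?_
    have h1 : (homogeneousComponent e c * homogeneousComponent d f).IsHomogeneous (e + d) :=
      (homogeneousComponent_isHomogeneous e c).mul (homogeneousComponent_isHomogeneous d f)
    rw [homogeneousComponent_of_mem ((mem_homogeneousSubmodule _ _).mpr h1)]
    split_ifs
    · rw [map_mul, hf x d, mul_zero]
    · simp

/-- The Hilbert function of `S/I(X)`: the dimension over `K` of the degree-`d`
homogeneous component of the quotient, realized as the image of the space of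
degree-`d` homogeneous polynomials in the quotient. -/
noncomputable def hilbert (G : Multigraph V E) (d : ℕ) : ℕ :=
  Module.finrank K
    ((homogeneousSubmodule E K d).map (Ideal.Quotient.mkₐ K (G.vanishingIdeal K)).toLinearMap)

/-- The regularity `reg G`: the least `d` such that the Hilbert function of `S/I(X)`
at `d` equals the number of points of `X`. -/
noncomputable def reg (G : Multigraph V E) : ℕ :=
  sInf {d : ℕ | G.hilbert K d = (G.toricSet K).ncard}

/-- The graph obtained from `G` by deleting a vertex `v` and all edges incident
to it. -/
def deleteVert (G : Multigraph V E) (v : V) :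
    Multigraph {w : V // w ≠ v} {e : E // ¬ G.Incident v e} where
  fst e := ⟨G.fst e.1, fun h => e.2 (Or.inl h)⟩
  snd e := ⟨G.snd e.1, fun h => e.2 (Or.inr h)⟩
  ne e h := G.ne e.1 (congrArg Subtype.val h)

/-- The graph obtained from `G` by identifying the vertex `v₂` with the vertex `v₁`:
the edges are the same, and every endpoint equal to `v₂` is replaced by `v₁`.
This requires that `{v₁, v₂}` is a non-edge of `G`, so that no loops are created. -/
def identifyVert [DecidableEq V] (G : Multigraph V E) (v₁ v₂ : V) (h12 : v₁ ≠ v₂)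
    (h : ∀ e, ¬ (G.Incident v₁ e ∧ G.Incident v₂ e)) :
    Multigraph {w : V // w ≠ v₂} E where
  fst e := ⟨if G.fst e = v₂ then v₁ else G.fst e, by split_ifs with hh; exacts [h12, hh]⟩
  snd e := ⟨if G.snd e = v₂ then v₁ else G.snd e, by split_ifs with hh; exacts [h12, hh]⟩
  ne := by
    intro e heq
    rw [Subtype.ext_iff] at heq
    simp only at heq
    split_ifs at heq with h1 h2 h2
    · exact G.ne e (h1.trans h2.symm)
    · exact h e ⟨Or.inr heq.symm, Or.inl h1⟩
    · exact h e ⟨Or.inl heq, Or.inr h2⟩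
    · exact G.ne e heq

/-- The subgraph of `G` determined by a set `A` of edges of `G`, together with all
endpoints of those edges (so it has no isolated vertices). -/
def subgraph [DecidableEq V] (G : Multigraph V E) (A : Finset E) :
    Multigraph {v : V // ∃ e ∈ A, G.Incident v e} {e : E // e ∈ A} where
  fst e := ⟨G.fst e.1, e.1, e.2, Or.inl rfl⟩
  snd e := ⟨G.snd e.1, e.1, e.2, Or.inr rfl⟩
  ne e h := G.ne e.1 (congrArg Subtype.val h)

end Multigraph

/-- The vertex of the parallel composition of paths of lengths `k i` lying on the
`i`-th path at distance `j` from the common initial vertex:  `j = 0` gives the common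
initial vertex, `j = k i` the common terminal vertex, and `0 < j < k i` gives the
`j`-th interior vertex of the `i`-th path. -/
def pcVert {ι : Type} (k : ι → ℕ) (i : ι) (j : ℕ) :
    Bool ⊕ ((i : ι) × Fin (k i - 1)) :=
  if h0 : j = 0 then Sum.inl false
  else if h : j < k i then Sum.inr ⟨i, ⟨j - 1, by omega⟩⟩
  else Sum.inl true

/-- The parallel composition of the family of paths `P i` of lengths `k i` (`i : ι`):
the `i`-th path has `k i` edges indexed by `Fin (k i)`, its `j`-th edge joining the
vertices of the `i`-th path at distances `j` and `j + 1` from the common initial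
vertex.  All the initial vertices of the paths are identified to a single vertex and
all the terminal vertices are identified to a single vertex. -/
def parallelComp {ι : Type} (k : ι → ℕ) :
    Multigraph (Bool ⊕ ((i : ι) × Fin (k i - 1))) ((i : ι) × Fin (k i)) where
  fst e := pcVert k e.1 e.2.1
  snd e := pcVert k e.1 (e.2.1 + 1)
  ne := by
    rintro ⟨i, j⟩ h
    have hj := j.2
    simp only [pcVert] at h
    split_ifs at h <;> simp_all <;> omega

/-- The monomial `f i`: the product of the edges of the `i`-th path of the parallel
composition in odd positions (positions `1, 3, 5, ...`, i.e. indices `0, 2, 4, ...`). -/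
noncomputable def oddProd {ι : Type} (K : Type) [Field K] (k : ι → ℕ) (i : ι) :
    MvPolynomial ((i : ι) × Fin (k i)) K :=
  ∏ m : Fin ((k i + 1) / 2), X ⟨i, ⟨2 * m.1, by have := m.2; omega⟩⟩

/-- The monomial `g i`: the product of the edges of the `i`-th path of the parallel
composition in even positions (positions `2, 4, 6, ...`, i.e. indices `1, 3, 5, ...`). -/
noncomputable def evenProd {ι : Type} (K : Type) [Field K] (k : ι → ℕ) (i : ι) :
    MvPolynomial ((i : ι) × Fin (k i)) K :=
  ∏ m : Fin (k i / 2), X ⟨i, ⟨2 * m.1 + 1, by have := m.2; omega⟩⟩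

/-!
The affine cone over the projective toric subset of a graph `G` is a subgroup `T` of the torus
`(Kˣ)^E`. By independence of characters, `HF_G(d)` counts the characters of `T` induced by
monomials of degree `d`. Every character of `T` is induced by some monomial, and exactly `|X|` of
them have weight `d`, that is, restrict to `c ↦ c ^ d` on the scalars; multiplying a monomial by
`t_e ^ (q - 1)` does not change its character. Hence `HF_G(d) = |X|` if and only if every character
of weight `d` is induced by a monomial of degree at most `d`. Since every character is the product
of one of weight `d` with some `t_e ^ j`, `j ≤ q - 2`, it follows that `reg G + (q - 2)` is the
maximum over all characters of `T` of the least degree of a monomial inducing it. This maximum is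
additive over products of tori.

For a parallel composition of paths, a point of the torus lies in the cone if and only if its
alternating products along the paths of odd length all agree, and likewise for the paths of even
length. These two conditions are independent of each other, so the cone of `G` is the product of
the cones of `H₁` and `H₂`.
-/

lemma exists_lt_modEq_add {n : ℕ} (hn : 0 < n) (m d : ℕ) : ∃ j < n, m ≡ d + j [MOD n] := by
  have hd : d ≤ m + n * d := by nlinarith
  refine ⟨(m + n * d - d) % n, Nat.mod_lt _ hn, ?_⟩
  calc m ≡ m + n * d [MOD n] := by simp [Nat.ModEq]
    _ = d + (m + n * d - d) := (Nat.add_sub_cancel' hd).symm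
    _ ≡ d + (m + n * d - d) % n [MOD n] := (Nat.mod_modEq _ _).symm.add_left d

section Cyclic

variable {C : Type*} [CommGroup C] [IsCyclic C] [Finite C]

lemma exists_pow_of_monoidHom (φ : C →* C) : ∃ n : ℕ, ∀ c, φ c = c ^ n := by
  obtain ⟨g, hg⟩ := IsCyclic.exists_monoid_generator (α := C)
  obtain ⟨n, hn⟩ := Submonoid.mem_powers_iff _ _ |>.1 (hg (φ g))
  refine ⟨n, fun c => ?_⟩
  obtain ⟨m, rfl⟩ := Submonoid.mem_powers_iff _ _ |>.1 (hg c)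
  rw [map_pow, ← hn, pow_right_comm]

lemma exists_prod_pow_of_monoidHom {E : Type*} [Fintype E] (φ : (E → C) →* C) :
    ∃ a : E → ℕ, ∀ p, φ p = ∏ e, p e ^ a e := by
  classical
  choose a ha using fun e =>
    exists_pow_of_monoidHom (φ.comp (MonoidHom.mulSingle (fun _ : E => C) e))
  refine ⟨a, fun p => ?_⟩
  conv_lhs => rw [← Finset.univ_prod_mulSingle p, map_prod]
  exact Finset.prod_congr rfl fun e _ => ha e (p e)

end Cyclic

section FiniteField

variable {K : Type*} [Field K] [Finite K]

instance hasEnoughRootsOfUnity_card_units : HasEnoughRootsOfUnity K (Nat.card Kˣ) where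
  prim := by
    obtain ⟨g, hg⟩ := IsCyclic.exists_ofOrder_eq_natCard (α := Kˣ)
    exact ⟨g, hg ▸ IsPrimitiveRoot.coe_units_iff.2 (IsPrimitiveRoot.orderOf g)⟩
  cyc := inferInstance

lemma hasEnoughRootsOfUnity_exponent {G : Type*} [Group G] (h : ∀ g : G, g ^ Nat.card Kˣ = 1) :
    HasEnoughRootsOfUnity K (Monoid.exponent G) :=
  HasEnoughRootsOfUnity.of_dvd K (Monoid.exponent_dvd_of_forall_pow_eq_one h)

end FiniteField

section MonomialCharacters

variable {E K : Type*} [Field K] (T : Subgroup (E → Kˣ))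

/-- The subgroup of scalars of `T`, so that `T ⧸ scalars T` is the set of projective points
of `T`. -/
def scalars : Subgroup T :=
  (Pi.constMonoidHom E Kˣ).range.subgroupOf T

variable {T} in
lemma orbit_eq_orbit_iff_mem_scalars {p p' : T} :
    MulAction.orbit Kˣ (fun e => (p.1 e : K)) = MulAction.orbit Kˣ (fun e => (p'.1 e : K)) ↔
      p⁻¹ * p' ∈ scalars T := by
  rw [eq_comm, MulAction.orbit_eq_iff]
  have smul_eq_iff (c : Kˣ) : c • (fun e => (p.1 e : K)) = (fun e => (p'.1 e : K)) ↔
      Function.const E c = (p⁻¹ * p').1 := by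
    simp [funext_iff, eq_inv_mul_iff_mul_eq, Units.ext_iff, Units.smul_def, mul_comm]
  exact exists_congr smul_eq_iff

variable [Fintype E]

/-- The monomial `t ^ a`, as a character of a subgroup `T` of the torus `(Kˣ)^E`. -/
def monomialChar (a : E → ℕ) : T →* Kˣ where
  toFun p := ∏ e, p.1 e ^ a e
  map_one' := by simp
  map_mul' p p' := by simp [mul_pow, Finset.prod_mul_distrib]

/-- The characters of `T` induced by the monomials of degree `d`. -/
def degreeChars (d : ℕ) : Set (T →* Kˣ) :=
  monomialChar T '' {a | ∑ e, a e = d}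

/-- The characters of `T` through which the scalars act by `c ↦ c ^ d`. -/
def weightChars (d : ℕ) : Set (T →* Kˣ) :=
  {χ | ∀ (c : Kˣ) (hc : Function.const E c ∈ T), χ ⟨Function.const E c, hc⟩ = c ^ d}

/-- The least degree of a monomial inducing the character `χ` of `T`. -/
noncomputable def minDegree (χ : T →* Kˣ) : ℕ :=
  sInf {n | χ ∈ degreeChars T n}

variable {T}

lemma monomialChar_apply (a : E → ℕ) (p : T) : monomialChar T a p = ∏ e, p.1 e ^ a e :=
  rfl

lemma monomialChar_single [DecidableEq E] (e : E) (n : ℕ) (p : T) :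
    monomialChar T (Pi.single e n) p = p.1 e ^ n := by
  rw [monomialChar_apply, Finset.prod_eq_single e] <;> simp +contextual

lemma monomialChar_const (a : E → ℕ) (c : Kˣ) (hc : Function.const E c ∈ T) :
    monomialChar T a ⟨Function.const E c, hc⟩ = c ^ ∑ e, a e := by
  simp [monomialChar_apply, Finset.prod_pow_eq_pow_sum]

lemma degreeChars_subset_weightChars (d : ℕ) : degreeChars T d ⊆ weightChars T d := by
  rintro _ ⟨a, rfl, rfl⟩ c hc
  exact monomialChar_const a c hc

lemma minDegree_monomialChar_le (a : E → ℕ) : minDegree T (monomialChar T a) ≤ ∑ e, a e :=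
  Nat.sInf_le ⟨a, rfl, rfl⟩

lemma mem_degreeChars_add {χ ψ : T →* Kˣ} {d : ℕ} (hψ : ψ ∈ degreeChars T d) (e : E) (n : ℕ)
    (hχ : ∀ p : T, χ p = ψ p * p.1 e ^ n) : χ ∈ degreeChars T (d + n) := by
  classical
  obtain ⟨a, rfl, rfl⟩ := hψ
  refine ⟨a + Pi.single e n, by simp [Finset.sum_add_distrib], MonoidHom.ext fun p => ?_⟩
  rw [hχ, ← monomialChar_single]
  simp only [monomialChar_apply, Pi.add_apply, pow_add, Finset.prod_mul_distrib]

section Finite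

variable [Finite K]

instance hasEnoughRootsOfUnity_exponent_torus :
    HasEnoughRootsOfUnity K (Monoid.exponent (E → Kˣ)) :=
  hasEnoughRootsOfUnity_exponent fun _ => funext fun _ => pow_card_eq_one'

instance hasEnoughRootsOfUnity_exponent_subgroup : HasEnoughRootsOfUnity K (Monoid.exponent T) :=
  hasEnoughRootsOfUnity_exponent fun _ => Subtype.ext <| funext fun _ => pow_card_eq_one'

lemma monomialChar_surjective : Function.Surjective (monomialChar T) := by
  intro χ
  obtain ⟨φ, rfl⟩ := MonoidHom.domRestrict_surjective K T χ
  obtain ⟨a, ha⟩ := exists_prod_pow_of_monoidHom φ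
  exact ⟨a, MonoidHom.ext fun p => (ha p).symm⟩

lemma ncard_weightChars {E : Type*} [Finite E] [Nonempty E] (T : Subgroup (E → Kˣ)) (d : ℕ) :
    (weightChars T d).ncard = Nat.card (T ⧸ scalars T) := by
  classical
  have := Fintype.ofFinite E
  obtain ⟨e⟩ := ‹Nonempty E›
  let res := MonoidHom.domRestrictHom (scalars T) Kˣ
  have weightChars_eq_fiber :
      weightChars T d = res ⁻¹' {res (monomialChar T (Pi.single e d))} := by
    ext χ
    rw [Set.mem_preimage, Set.mem_singleton_iff, MonoidHom.ext_iff]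
    constructor
    · rintro hχ ⟨⟨p, hc⟩, c, hp⟩
      obtain rfl : Function.const E c = p := hp
      exact (hχ c hc).trans (monomialChar_single (T := T) e d ⟨_, hc⟩).symm
    · intro hχ c hc
      exact (hχ ⟨⟨_, hc⟩, c, rfl⟩).trans (monomialChar_single e d _)
  rw [weightChars_eq_fiber, ← Nat.card_coe_set_eq, Nat.card_congr (res.fiberEquivKer _),
    CommGroup.card_domRestrictHom_ker]

lemma ncard_degreeChars_eq_iff [Nonempty E] (d : ℕ) :
    (degreeChars T d).ncard = Nat.card (T ⧸ scalars T) ↔ weightChars T d ⊆ degreeChars T d := by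
  rw [← ncard_weightChars T d]
  refine ⟨fun h => ?_, fun h => ?_⟩
  · exact (Set.eq_of_subset_of_ncard_le (degreeChars_subset_weightChars d) h.ge).ge
  · rw [(degreeChars_subset_weightChars d).antisymm h]

lemma mem_degreeChars_minDegree (χ : T →* Kˣ) : χ ∈ degreeChars T (minDegree T χ) := by
  obtain ⟨a, rfl⟩ := monomialChar_surjective χ
  exact Nat.sInf_mem (s := {n | monomialChar T a ∈ degreeChars T n}) ⟨_, a, rfl, rfl⟩

lemma monomialChar_mem_weightChars_iff (hT : ∀ c : Kˣ, Function.const E c ∈ T)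
    {a : E → ℕ} {d : ℕ} :
    monomialChar T a ∈ weightChars T d ↔ ∑ e, a e ≡ d [MOD Nat.card Kˣ] := by
  obtain ⟨g, hg⟩ := IsCyclic.exists_ofOrder_eq_natCard (α := Kˣ)
  refine ⟨fun h => ?_, fun h c hc => ?_⟩
  · rw [← hg, ← pow_eq_pow_iff_modEq, ← monomialChar_const a g (hT g)]
    exact h g (hT g)
  · rw [monomialChar_const, pow_eq_pow_iff_modEq]
    exact h.of_dvd (orderOf_dvd_natCard c)

lemma mem_weightChars_iff (hT : ∀ c : Kˣ, Function.const E c ∈ T) {χ : T →* Kˣ}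
    {d : ℕ} : χ ∈ weightChars T d ↔ minDegree T χ ≡ d [MOD Nat.card Kˣ] := by
  obtain ⟨a, ha, hχ⟩ := mem_degreeChars_minDegree χ
  rw [← ha, ← monomialChar_mem_weightChars_iff hT, hχ]

lemma mem_degreeChars_iff [Nonempty E] (hT : ∀ c : Kˣ, Function.const E c ∈ T) {χ : T →* Kˣ}
    {d : ℕ} : χ ∈ degreeChars T d ↔ χ ∈ weightChars T d ∧ minDegree T χ ≤ d := by
  refine ⟨fun h => ⟨degreeChars_subset_weightChars d h, Nat.sInf_le h⟩, fun ⟨hw, hle⟩ => ?_⟩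
  obtain ⟨e⟩ := ‹Nonempty E›
  obtain ⟨m, hm⟩ := (Nat.modEq_iff_dvd' hle).1 ((mem_weightChars_iff hT).1 hw)
  have hmem := mem_degreeChars_add (mem_degreeChars_minDegree χ) e (d - minDegree T χ) fun p => by
    rw [hm, pow_mul, pow_card_eq_one', one_pow, mul_one]
  rwa [Nat.add_sub_cancel' hle] at hmem

lemma weightChars_subset_degreeChars_iff [Nonempty E] (hT : ∀ c : Kˣ, Function.const E c ∈ T)
    {d : ℕ} :
    weightChars T d ⊆ degreeChars T d ↔ ∀ χ, minDegree T χ ≤ d + (Nat.card Kˣ - 1) := by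
  classical
  have card_pos : 0 < Nat.card Kˣ := Nat.card_pos
  refine ⟨fun h χ => ?_, fun h χ hχ => (mem_degreeChars_iff hT).2 ⟨hχ, ?_⟩⟩
  · obtain ⟨e⟩ := ‹Nonempty E›
    obtain ⟨j, hj, hmod⟩ := exists_lt_modEq_add card_pos (minDegree T χ) d
    let τ := monomialChar T (Pi.single e j)
    have hdiv : χ / τ ∈ weightChars T d := fun c hc => by
      rw [MonoidHom.div_apply, (mem_weightChars_iff hT).2 hmod c hc, monomialChar_const,
        Finset.sum_pi_single', if_pos (Finset.mem_univ e), pow_add, mul_div_cancel_right]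
    have hmem := mem_degreeChars_add (χ := χ) (h hdiv) e j fun p => by
      rw [MonoidHom.div_apply, monomialChar_single, div_mul_cancel]
    exact (Nat.sInf_le hmem).trans (by omega)
  · by_contra! hlt
    have hdvd := (Nat.modEq_iff_dvd' hlt.le).1 ((mem_weightChars_iff hT).1 hχ).symm
    have := Nat.le_of_dvd (by omega) hdvd
    have := h χ
    omega

lemma exists_le_minDegree [Nonempty E] (hT : ∀ c : Kˣ, Function.const E c ∈ T) :
    ∃ χ, Nat.card Kˣ - 1 ≤ minDegree T χ := by
  classical
  obtain ⟨e⟩ := ‹Nonempty E›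
  let χ := monomialChar T (Pi.single e (Nat.card Kˣ - 1))
  have hχ : χ ∈ weightChars T (Nat.card Kˣ - 1) :=
    degreeChars_subset_weightChars _ ⟨_, by simp, rfl⟩
  have hmod := (mem_weightChars_iff hT).1 hχ
  refine ⟨χ, ?_⟩
  have hlt : Nat.card Kˣ - 1 < Nat.card Kˣ := Nat.sub_lt Nat.card_pos one_pos
  exact (Nat.mod_eq_of_lt hlt).symm.trans_le (hmod.symm.trans_le (Nat.mod_le _ _))

lemma isGreatest_minDegree [Nonempty E] (hT : ∀ c : Kˣ, Function.const E c ∈ T) :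
    IsGreatest (Set.range (minDegree T))
      (sInf {d | (degreeChars T d).ncard = Nat.card (T ⧸ scalars T)} + (Nat.card Kˣ - 1)) := by
  obtain ⟨χ, hχ⟩ := Finite.exists_max (minDegree T)
  have card_le : Nat.card Kˣ - 1 ≤ minDegree T χ := by
    obtain ⟨ψ, hψ⟩ := exists_le_minDegree hT
    exact hψ.trans (hχ ψ)
  have eq_Ici : {d | (degreeChars T d).ncard = Nat.card (T ⧸ scalars T)} =
      Set.Ici (minDegree T χ - (Nat.card Kˣ - 1)) := by
    ext d
    rw [Set.mem_ofPred_eq, ncard_degreeChars_eq_iff, weightChars_subset_degreeChars_iff hT,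
      Set.mem_Ici, tsub_le_iff_right]
    exact ⟨fun h => h χ, fun h ψ => (hχ ψ).trans h⟩
  rw [eq_Ici, csInf_Ici, Nat.sub_add_cancel card_le]
  exact ⟨⟨χ, rfl⟩, Set.forall_mem_range.2 hχ⟩

end Finite

section Product

open scoped Pointwise

variable {E₁ E₂ : Type*} [Fintype E₁] [Fintype E₂] {T₁ : Subgroup (E₁ → Kˣ)}
  {T₂ : Subgroup (E₂ → Kˣ)} (σ : E₁ ⊕ E₂ ≃ E)

lemma monomialChar_eq_iff
    (hT : ∀ p, p ∈ T ↔ p ∘ σ ∘ Sum.inl ∈ T₁ ∧ p ∘ σ ∘ Sum.inr ∈ T₂) {a b : E → ℕ} :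
    monomialChar T a = monomialChar T b ↔
      monomialChar T₁ (a ∘ σ ∘ Sum.inl) = monomialChar T₁ (b ∘ σ ∘ Sum.inl) ∧
        monomialChar T₂ (a ∘ σ ∘ Sum.inr) = monomialChar T₂ (b ∘ σ ∘ Sum.inr) := by
  simp only [MonoidHom.ext_iff, Subtype.forall, monomialChar_apply, ← σ.prod_comp,
    Fintype.prod_sum_type, hT, Function.comp_apply]
  refine ⟨fun h => ⟨fun p hp => ?_, fun p hp => ?_⟩, fun h p hp => ?_⟩
  · simpa using h (Sum.elim p 1 ∘ σ.symm)
      ⟨by simpa [Function.comp_def] using hp, by simp [Function.comp_def, ← Pi.one_def, one_mem]⟩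
  · simpa using h (Sum.elim 1 p ∘ σ.symm)
      ⟨by simp [Function.comp_def, ← Pi.one_def, one_mem], by simpa [Function.comp_def] using hp⟩
  · exact congrArg₂ (· * ·) (h.1 _ hp.1) (h.2 _ hp.2)

lemma minDegree_monomialChar_eq_add [Finite K]
    (hT : ∀ p, p ∈ T ↔ p ∘ σ ∘ Sum.inl ∈ T₁ ∧ p ∘ σ ∘ Sum.inr ∈ T₂) (a : E → ℕ) :
    minDegree T (monomialChar T a) = minDegree T₁ (monomialChar T₁ (a ∘ σ ∘ Sum.inl)) +
      minDegree T₂ (monomialChar T₂ (a ∘ σ ∘ Sum.inr)) := by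
  apply le_antisymm
  · obtain ⟨b₁, hb₁, h₁⟩ := mem_degreeChars_minDegree (monomialChar T₁ (a ∘ σ ∘ Sum.inl))
    obtain ⟨b₂, hb₂, h₂⟩ := mem_degreeChars_minDegree (monomialChar T₂ (a ∘ σ ∘ Sum.inr))
    rw [← hb₁, ← hb₂]
    refine Nat.sInf_le ⟨Sum.elim b₁ b₂ ∘ σ.symm, ?_, (monomialChar_eq_iff σ hT).2 ⟨?_, ?_⟩⟩
    · simp [← σ.sum_comp]
    · simpa [Function.comp_def] using h₁
    · simpa [Function.comp_def] using h₂
  · obtain ⟨b, hb, h⟩ := mem_degreeChars_minDegree (monomialChar T a)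
    obtain ⟨h₁, h₂⟩ := (monomialChar_eq_iff σ hT).1 h
    rw [← hb, ← h₁, ← h₂, ← σ.sum_comp, Fintype.sum_sum_type]
    exact add_le_add (minDegree_monomialChar_le _) (minDegree_monomialChar_le _)

lemma range_minDegree_eq_add [Finite K]
    (hT : ∀ p, p ∈ T ↔ p ∘ σ ∘ Sum.inl ∈ T₁ ∧ p ∘ σ ∘ Sum.inr ∈ T₂) :
    Set.range (minDegree T) = Set.range (minDegree T₁) + Set.range (minDegree T₂) := by
  apply subset_antisymm
  · rintro _ ⟨χ, rfl⟩
    obtain ⟨a, rfl⟩ := monomialChar_surjective χ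
    rw [minDegree_monomialChar_eq_add σ hT]
    exact Set.add_mem_add (Set.mem_range_self _) (Set.mem_range_self _)
  · rintro _ ⟨_, ⟨χ₁, rfl⟩, _, ⟨χ₂, rfl⟩, rfl⟩
    obtain ⟨a₁, rfl⟩ := monomialChar_surjective χ₁
    obtain ⟨a₂, rfl⟩ := monomialChar_surjective χ₂
    refine ⟨monomialChar T (Sum.elim a₁ a₂ ∘ σ.symm), ?_⟩
    rw [minDegree_monomialChar_eq_add σ hT]
    simp [Function.comp_def]

end Product

end MonomialCharacters

section HomogeneousPolynomials

variable {σ R : Type*} [CommSemiring R]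

lemma eval_smul_of_isHomogeneous {f : MvPolynomial σ R} {d : ℕ} (hf : f.IsHomogeneous d)
    (c : R) (p : σ → R) : eval (c • p) f = c ^ d * eval p f := by
  rw [eval_eq, eval_eq, Finset.mul_sum]
  refine Finset.sum_congr rfl fun a ha => ?_
  rw [hf.degree_eq_sum_deg_support ha, ← Finset.prod_pow_eq_pow_sum, mul_left_comm,
    ← Finset.prod_mul_distrib]
  simp only [Pi.smul_apply, smul_eq_mul, mul_pow]

lemma homogeneousSubmodule_eq_span_monomial (d : ℕ) :
    homogeneousSubmodule σ R d =
      Submodule.span R ((fun a => monomial a (1 : R)) '' {a : σ →₀ ℕ | a.degree = d}) := by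
  rw [homogeneousSubmodule_eq_finsupp_supported, AddMonoidAlgebra.supported_eq_span_single]
  rfl

end HomogeneousPolynomials

lemma finrank_map_eq_of_map_eq_zero_iff {R M N P : Type*} [Ring R] [AddCommGroup M] [Module R M]
    [AddCommGroup N] [Module R N] [AddCommGroup P] [Module R P] {S : Submodule R M}
    {f : M →ₗ[R] N} {g : M →ₗ[R] P} (h : ∀ m ∈ S, f m = 0 ↔ g m = 0) :
    Module.finrank R (S.map f) = Module.finrank R (S.map g) := by
  have ker_eq : LinearMap.ker (f.domRestrict S) = LinearMap.ker (g.domRestrict S) := by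
    ext m
    simpa using h m.1 m.2
  rw [← LinearMap.range_domRestrict, ← LinearMap.range_domRestrict]
  exact ((f.domRestrict S).quotKerEquivRange.symm ≪≫ₗ Submodule.quotEquivOfEq _ _ ker_eq ≪≫ₗ
    (g.domRestrict S).quotKerEquivRange).finrank_eq

section EvaluationOnTorus

variable {E K : Type*} [Field K]

/-- Restriction of polynomials to functions on a subgroup `T` of the torus `(Kˣ)^E`. -/
noncomputable def evalTorus (T : Subgroup (E → Kˣ)) : MvPolynomial E K →ₗ[K] (T → K) :=
  LinearMap.pi fun p => (aeval fun e => (p.1 e : K)).toLinearMap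

lemma evalTorus_apply (T : Subgroup (E → Kˣ)) (f : MvPolynomial E K) (p : T) :
    evalTorus T f p = eval (fun e => (p.1 e : K)) f := by
  simp [evalTorus, aeval_eq_eval]

variable [Fintype E] (T : Subgroup (E → Kˣ))

lemma evalTorus_monomial (a : E →₀ ℕ) :
    evalTorus T (monomial a 1) = (Units.coeHom K).comp (monomialChar T a) := by
  ext p
  simp [evalTorus_apply, eval_monomial, Finsupp.prod_fintype, monomialChar_apply]

lemma map_evalTorus_homogeneousSubmodule (d : ℕ) :
    (homogeneousSubmodule E K d).map (evalTorus T) =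
      Submodule.span K ((fun χ => ⇑((Units.coeHom K).comp χ)) '' degreeChars T d) := by
  have degree_image : {a : E → ℕ | ∑ e, a e = d} = (⇑) '' {a : E →₀ ℕ | a.degree = d} := by
    simp only [Finsupp.degree_eq_sum]
    exact (Finsupp.equivFunOnFinite.surjective.image_preimage _).symm
  rw [homogeneousSubmodule_eq_span_monomial, Submodule.map_span, degreeChars, degree_image]
  simp only [Set.image_image, evalTorus_monomial]

lemma finrank_map_evalTorus_homogeneousSubmodule [Finite K] (d : ℕ) :
    Module.finrank K ((homogeneousSubmodule E K d).map (evalTorus T)) =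
      (degreeChars T d).ncard := by
  have coe_injective :
      Function.Injective fun χ : T →* Kˣ => (Units.coeHom K).comp χ :=
    fun χ ψ h => MonoidHom.ext fun p => Units.ext (DFunLike.congr_fun h p)
  have linearIndependent_chars :=
    ((linearIndependent_monoidHom T K).comp _ coe_injective).comp
      (Subtype.val : degreeChars T d → T →* Kˣ) Subtype.val_injective
  have := Fintype.ofFinite (degreeChars T d)
  rw [map_evalTorus_homogeneousSubmodule, Set.image_eq_range, ← Nat.card_coe_set_eq,
    Nat.card_eq_fintype_card]
  exact finrank_span_eq_card linearIndependent_chars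

end EvaluationOnTorus

namespace Multigraph

variable {V E : Type} {K : Type} [Field K]

variable (K) in
/-- The affine cone over the projective toric subset parameterized by `G`, as a subgroup of the
torus `(Kˣ)^E`. -/
def toricCone (G : Multigraph V E) : Subgroup (E → Kˣ) where
  carrier := {p | ∃ (c : Kˣ) (x : V → Kˣ), ∀ e, p e = c * (x (G.fst e) * x (G.snd e))}
  one_mem' := ⟨1, 1, by simp⟩
  mul_mem' := by
    rintro p p' ⟨c, x, hp⟩ ⟨c', x', hp'⟩
    exact ⟨c * c', x * x', fun e => by simp [hp, hp', mul_mul_mul_comm]⟩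
  inv_mem' := by
    rintro p ⟨c, x, hp⟩
    exact ⟨c⁻¹, x⁻¹, fun e => by simp [hp, mul_comm]⟩

lemma mem_toricCone {G : Multigraph V E} {p : E → Kˣ} :
    p ∈ G.toricCone K ↔
      ∃ (c : Kˣ) (x : V → Kˣ), ∀ e, p e = c * (x (G.fst e) * x (G.snd e)) :=
  Iff.rfl

lemma const_mem_toricCone (G : Multigraph V E) (c : Kˣ) : Function.const E c ∈ G.toricCone K :=
  ⟨c, 1, by simp⟩

variable (G : Multigraph V E)

lemma mem_toricCone_iff_smul_point {p : E → Kˣ} :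
    p ∈ G.toricCone K ↔ ∃ (c : Kˣ) (x : V → Kˣ), (fun e => (p e : K)) = c • G.point K x := by
  simp only [mem_toricCone, funext_iff, Pi.smul_apply, Units.smul_def, point, smul_eq_mul,
    Units.ext_iff, Units.val_mul]

lemma mem_vanishingIdeal_iff {f : MvPolynomial E K} {d : ℕ} (hf : f.IsHomogeneous d) :
    f ∈ G.vanishingIdeal K ↔ ∀ x : V → Kˣ, eval (G.point K x) f = 0 := by
  refine ⟨fun h x => ?_, fun h x n => ?_⟩
  · simpa [homogeneousComponent_of_mem hf] using h x d
  · rw [homogeneousComponent_of_mem hf]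
    split_ifs
    exacts [h x, map_zero _]

lemma mem_vanishingIdeal_iff_evalTorus {f : MvPolynomial E K} {d : ℕ} (hf : f.IsHomogeneous d) :
    f ∈ G.vanishingIdeal K ↔ evalTorus (G.toricCone K) f = 0 := by
  simp only [G.mem_vanishingIdeal_iff hf, funext_iff, evalTorus_apply, Pi.zero_apply]
  refine ⟨fun h ⟨p, hp⟩ => ?_, fun h x => ?_⟩
  · obtain ⟨c, x, hpx⟩ := G.mem_toricCone_iff_smul_point.1 hp
    rw [hpx, Units.smul_def, eval_smul_of_isHomogeneous hf, h x, mul_zero]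
  · exact h ⟨fun e => x (G.fst e) * x (G.snd e), 1, x, by simp⟩

lemma hilbert_eq_ncard_degreeChars [Fintype E] [Finite K] (d : ℕ) :
    G.hilbert K d = (degreeChars (G.toricCone K) d).ncard := by
  rw [← finrank_map_evalTorus_homogeneousSubmodule]
  refine finrank_map_eq_of_map_eq_zero_iff fun f hf => ?_
  rw [← G.mem_vanishingIdeal_iff_evalTorus hf]
  exact Ideal.Quotient.eq_zero_iff_mem

lemma card_quotient_scalars :
    Nat.card (G.toricCone K ⧸ scalars (G.toricCone K)) = (G.toricSet K).ncard := by
  let φ : G.toricCone K → Set (E → K) := fun p => MulAction.orbit Kˣ fun e => (p.1 e : K)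
  have leftRel_eq_ker : QuotientGroup.leftRel (scalars (G.toricCone K)) = Setoid.ker φ := by
    ext p p'
    rw [QuotientGroup.leftRel_apply, Setoid.ker_def, orbit_eq_orbit_iff_mem_scalars]
  have range_eq : Set.range φ = G.toricSet K := by
    apply subset_antisymm
    · rintro _ ⟨⟨p, hp⟩, rfl⟩
      obtain ⟨c, x, hpx⟩ := G.mem_toricCone_iff_smul_point.1 hp
      exact ⟨x, by simp only [φ, hpx, MulAction.orbit_smul]⟩
    · rintro _ ⟨x, rfl⟩
      exact ⟨⟨fun e => x (G.fst e) * x (G.snd e), 1, x, by simp⟩, rfl⟩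
  have e : G.toricCone K ⧸ scalars (G.toricCone K) ≃ Set.range φ :=
    (Quotient.congrRight fun p p' => by rw [← leftRel_eq_ker]).trans
      (Setoid.quotientKerEquivRange φ)
  rw [Nat.card_congr e, range_eq, Nat.card_coe_set_eq]

lemma isGreatest_reg [Fintype K] [Fintype E] [Nonempty E] :
    IsGreatest (Set.range (minDegree (G.toricCone K))) (G.reg K + (Fintype.card K - 2)) := by
  have h := isGreatest_minDegree (G.const_mem_toricCone (K := K))
  simp only [← hilbert_eq_ncard_degreeChars, card_quotient_scalars] at h
  rw [Nat.card_units, Nat.card_eq_fintype_card, Nat.sub_sub] at h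
  exact h

open scoped Pointwise in
lemma reg_eq_add {V₁ V₂ E₁ E₂ : Type} [Fintype K] [Finite E₁] [Finite E₂] [Nonempty E₁]
    [Nonempty E₂] {G : Multigraph V E} {H₁ : Multigraph V₁ E₁} {H₂ : Multigraph V₂ E₂}
    (σ : E₁ ⊕ E₂ ≃ E)
    (hG : ∀ p, p ∈ G.toricCone K ↔
      p ∘ σ ∘ Sum.inl ∈ H₁.toricCone K ∧ p ∘ σ ∘ Sum.inr ∈ H₂.toricCone K) :
    G.reg K = H₁.reg K + H₂.reg K + (Fintype.card K - 2) := by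
  have := Fintype.ofFinite E₁
  have := Fintype.ofFinite E₂
  have := Fintype.ofEquiv _ σ
  have := σ.symm.nonempty
  obtain ⟨mem₁, le₁⟩ := H₁.isGreatest_reg (K := K)
  obtain ⟨mem₂, le₂⟩ := H₂.isGreatest_reg (K := K)
  have isGreatest_add := And.intro (Set.add_mem_add mem₁ mem₂) (add_mem_upperBounds_add le₁ le₂)
  rw [← range_minDegree_eq_add σ hG] at isGreatest_add
  have := IsGreatest.unique G.isGreatest_reg isGreatest_add
  omega

end Multigraph

section AlternatingProduct

variable {A : Type*} [CommGroup A] {n : ℕ}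

/-- The alternating product `p 0 * (p 1)⁻¹ * p 2 * (p 3)⁻¹ * ⋯`. -/
def altProd (p : Fin n → A) : A :=
  ∏ j, p j ^ ((-1 : ℤ) ^ (j : ℕ))

lemma altProd_succ (p : Fin (n + 1) → A) :
    altProd p = altProd (p ∘ Fin.castSucc) * p (Fin.last n) ^ ((-1 : ℤ) ^ n) :=
  Fin.prod_univ_castSucc _

lemma altProd_consecutive_mul (c : A) (x : ℕ → A) (n : ℕ) :
    altProd (fun j : Fin n => c * (x j * x (j + 1))) =
      if Even n then x 0 / x n else c * (x 0 * x n) := by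
  induction n with
  | zero => simp [altProd]
  | succ n ih =>
    have init_eq : (fun j : Fin (n + 1) => c * (x j * x (j + 1))) ∘ Fin.castSucc =
        fun j : Fin n => c * (x j * x (j + 1)) := rfl
    rw [altProd_succ, init_eq, ih]
    rcases n.even_or_odd with hn | hn
    · rw [if_pos hn, if_neg (Nat.not_even_iff_odd.2 hn.add_one), hn.neg_one_pow, zpow_one,
        Fin.val_last, mul_left_comm, ← mul_assoc (x 0 / x n), div_mul_cancel]
    · rw [if_neg (Nat.not_even_iff_odd.2 hn), if_pos hn.add_one, hn.neg_one_pow, zpow_neg_one,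
        Fin.val_last, ← div_eq_mul_inv, mul_div_mul_left_eq_div, mul_comm (x n),
        mul_div_mul_right_eq_div]

lemma exists_consecutive_mul_eq (c α : A) (p : Fin n → A) :
    ∃ w : ℕ → A, w 0 = α ∧ p = fun j : Fin n => c * (w j * w (j + 1)) := by
  let w : ℕ → A :=
    Nat.rec α fun j wj => if hj : j < n then p ⟨j, hj⟩ / (c * wj) else 1
  refine ⟨w, rfl, funext fun j => ?_⟩
  have step : w (j + 1) = p j / (c * w j) := dif_pos j.2
  rw [step, ← mul_assoc, mul_div_cancel]

lemma exists_consecutive_mul_eq_iff {c α β : A} {p : Fin n → A} :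
    (∃ w : ℕ → A, w 0 = α ∧ w n = β ∧ p = fun j : Fin n => c * (w j * w (j + 1))) ↔
      altProd p = if Even n then α / β else c * (α * β) := by
  constructor
  · rintro ⟨w, rfl, rfl, rfl⟩
    exact altProd_consecutive_mul c w n
  · intro hp
    obtain ⟨w, rfl, rfl⟩ := exists_consecutive_mul_eq c α p
    refine ⟨w, rfl, ?_, rfl⟩
    rw [altProd_consecutive_mul] at hp
    split_ifs at hp
    exacts [div_right_injective hp, mul_left_cancel (mul_left_cancel hp)]

end AlternatingProduct

section ParallelComposition

variable {ι : Type} {k : ι → ℕ}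

lemma pcVert_length {i : ι} (hk : 0 < k i) : pcVert k i (k i) = Sum.inl true := by
  simp [pcVert, hk.ne']

lemma exists_forall_pcVert_eq {A : Type*} {α β : A} {w : ι → ℕ → A} (hα : ∀ i, w i 0 = α)
    (hβ : ∀ i, w i (k i) = β) :
    ∃ x : Bool ⊕ ((i : ι) × Fin (k i - 1)) → A, ∀ i, ∀ j ≤ k i, x (pcVert k i j) = w i j := by
  refine ⟨Sum.elim (fun b => bif b then β else α) fun v => w v.1 (v.2 + 1), fun i j hj => ?_⟩
  rcases Nat.eq_zero_or_pos j with rfl | hj₀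
  · exact (hα i).symm
  rcases hj.lt_or_eq with hlt | rfl
  · simp [pcVert, hj₀.ne', hlt, Nat.sub_add_cancel hj₀]
  · simp [pcVert_length hj₀, hβ]

variable {K : Type} [Field K]

lemma mem_toricCone_parallelComp_iff_exists_ends (hk : ∀ i, 0 < k i)
    {p : (i : ι) × Fin (k i) → Kˣ} :
    p ∈ (parallelComp k).toricCone K ↔ ∃ c α β : Kˣ, ∀ i,
      altProd (fun j => p ⟨i, j⟩) = if Even (k i) then α / β else c * (α * β) := by
  simp only [← exists_consecutive_mul_eq_iff]
  constructor
  · rintro ⟨c, x, hp⟩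
    refine ⟨c, x (Sum.inl false), x (Sum.inl true), fun i => ⟨fun j => x (pcVert k i j), ?_⟩⟩
    exact ⟨rfl, congrArg x (pcVert_length (hk i)), funext fun j => hp ⟨i, j⟩⟩
  · rintro ⟨c, α, β, h⟩
    choose w hα hβ hw using h
    obtain ⟨x, hx⟩ := exists_forall_pcVert_eq hα hβ
    refine ⟨c, x, fun ⟨i, j⟩ => ?_⟩
    change _ = c * (x (pcVert k i j) * x (pcVert k i (j + 1)))
    rw [hx i j j.2.le, hx i (j + 1) j.2]
    exact congrFun (hw i) j

lemma mem_toricCone_parallelComp_iff (hk : ∀ i, 0 < k i) {p : (i : ι) × Fin (k i) → Kˣ} :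
    p ∈ (parallelComp k).toricCone K ↔
      ∃ γ δ : Kˣ, ∀ i, altProd (fun j => p ⟨i, j⟩) = if Even (k i) then δ else γ := by
  rw [mem_toricCone_parallelComp_iff_exists_ends hk]
  constructor
  · rintro ⟨c, α, β, h⟩
    exact ⟨c * (α * β), α / β, h⟩
  · rintro ⟨γ, δ, h⟩
    exact ⟨γ / δ, δ, 1, by simpa using h⟩

/-- The edges of a parallel composition of paths, sorted by the parity of the length of their
path. -/
def edgeParityEquiv (k : ι → ℕ) :
    ((i : {i // Odd (k i)}) × Fin (k i)) ⊕ ((i : {i // Even (k i)}) × Fin (k i)) ≃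
      (i : ι) × Fin (k i) :=
  let parityEquiv : {i // Odd (k i)} ⊕ {i // Even (k i)} ≃ ι :=
    ((Equiv.refl _).sumCongr (.subtypeEquivRight fun _ => Nat.not_odd_iff_even.symm)).trans
      (Equiv.sumCompl fun i => Odd (k i))
  (Equiv.sumSigmaDistrib fun i => Fin (k (parityEquiv i))).symm.trans
    (Equiv.sigmaCongrLeft (β := fun i => Fin (k i)) parityEquiv)

lemma mem_toricCone_parallelComp_iff_odd_even (hk : ∀ i, 0 < k i)
    (p : (i : ι) × Fin (k i) → Kˣ) :
    p ∈ (parallelComp k).toricCone K ↔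
      p ∘ edgeParityEquiv k ∘ Sum.inl ∈
          (parallelComp fun i : {i // Odd (k i)} => k i).toricCone K ∧
        p ∘ edgeParityEquiv k ∘ Sum.inr ∈
          (parallelComp fun i : {i // Even (k i)} => k i).toricCone K := by
  rw [mem_toricCone_parallelComp_iff hk,
    mem_toricCone_parallelComp_iff (k := fun i : {i // Odd (k i)} => k i) fun i => hk i,
    mem_toricCone_parallelComp_iff (k := fun i : {i // Even (k i)} => k i) fun i => hk i]
  constructor
  · rintro ⟨γ, δ, h⟩
    exact ⟨⟨γ, δ, fun i => h i.1⟩, ⟨γ, δ, fun i => h i.1⟩⟩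
  · rintro ⟨⟨γ, _, hodd⟩, ⟨_, δ, heven⟩⟩
    refine ⟨γ, δ, fun i => ?_⟩
    rcases (k i).even_or_odd with hi | hi
    · rw [if_pos hi]
      exact (heven ⟨i, hi⟩).trans (if_pos hi)
    · rw [if_neg (Nat.not_even_iff_odd.2 hi)]
      exact (hodd ⟨i, hi⟩).trans (if_neg (Nat.not_even_iff_odd.2 hi))

theorem reg_parallelComp_mixed_parity_lower_bound_general [Fintype K] [Finite ι]
    (hk : ∀ i, 0 < k i) (hodd : ∃ i, Odd (k i)) (heven : ∃ i, Even (k i)) :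
    (parallelComp k).reg K =
      (parallelComp fun i : {i // Odd (k i)} => k i).reg K +
        (parallelComp fun i : {i // Even (k i)} => k i).reg K + (Fintype.card K - 2) := by
  obtain ⟨i₁, hi₁⟩ := hodd
  obtain ⟨i₂, hi₂⟩ := heven
  have : Nonempty ((i : {i // Odd (k i)}) × Fin (k i)) := ⟨⟨i₁, hi₁⟩, 0, hk i₁⟩
  have : Nonempty ((i : {i // Even (k i)}) × Fin (k i)) := ⟨⟨i₂, hi₂⟩, 0, hk i₂⟩
  exact Multigraph.reg_eq_add (edgeParityEquiv k) (mem_toricCone_parallelComp_iff_odd_even hk)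

end ParallelComposition

/-- **Theorem 3.5.**  Let `G` be the parallel composition of `r ≥ 2` paths whose
lengths have mixed parities, `H₁` the parallel composition of the paths of odd length
and `H₂` the parallel composition of the paths of even length.  Then
`reg G ≥ reg H₁ + reg H₂ + (q-2)`, where `q = |K|`. -/
theorem reg_parallelComp_mixed_parity_lower_bound
    (K : Type) [Field K] [Fintype K] (r : ℕ) (hr : 2 ≤ r)
    (k : Fin r → ℕ) (hk : ∀ i, 0 < k i)
    (hodd : ∃ i, Odd (k i)) (heven : ∃ i, Even (k i)) :
    (parallelComp fun i : {i : Fin r // Odd (k i)} => k i.1).reg K +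
      (parallelComp fun i : {i : Fin r // Even (k i)} => k i.1).reg K +
      (Fintype.card K - 2) ≤ (parallelComp k).reg K := by
  exact (reg_parallelComp_mixed_parity_lower_bound_general hk hodd heven).ge
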